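/- Let U be a D×D unitary complex matrix whose spectrum consists of exactly d ≥ 2 distinct eigenvalues e^{iφ_1}, …, e^{iφ_d} with each φ_k ∈ [0, 2π). Then for every ε with 0 < ε ≤ 1/2 there exists a positive integer m_r with m_r ≤ (π / max_{j,k} R(φ_j, φ_k)) · ⌈π/ε⌉ · (2⌈π/ε⌉ + 1)^(d−2) such that: (i) for every unit vector ψ ∈ ℂ^D, 1 − |⟨ψ, U^{m_r} ψ⟩|² ≤ ε², and (ii) there exist a unit vector φ ∈ ℂ^D and a positive integer m′ ≤ m_r such that 1 − |⟨φ, U^{m′} φ⟩|² > ε². -/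

import Mathlib

/-!
Write the eigenvalues as `exp (i θ k)`. If `θ p` and `θ q` are the two phases furthest apart and
`τ = ⌊π / ‖θ p - θ q‖⌋`, then `τ • θ p` and `τ • θ q` are at least a quarter turn apart, so the
normalized sum of two corresponding eigenvectors is sent by `U ^ τ` to a state whose squared overlap
with it is at most `1 / 2`. Dirichlet's box principle, applied to the angles `τ • θ k`, yields a
multiple `τ * m` at which all phases lie within `ε` of a common angle `c`. Up to the global phase
`c`, the numerical range of `U ^ (τ * m)` then lies in the half-plane `1 - ε ^ 2 / 2 ≤ re z`, so
every state has returned.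
-/

open Matrix Real

section DirichletApproximation

theorem exists_lt_le_card_map_eq {α : Type*} [Fintype α] (f : ℕ → α) :
    ∃ a b, a < b ∧ b ≤ Fintype.card α ∧ f a = f b := by
  obtain ⟨a, b, hab, h⟩ :=
    Fintype.exists_ne_map_eq_of_card_lt (fun s : Fin (Fintype.card α + 1) => f s) (by simp)
  rcases lt_or_gt_of_ne hab with hlt | hgt
  · exact ⟨a, b, hlt, by lia, h⟩
  · exact ⟨b, a, hgt, by lia, h.symm⟩

theorem abs_toIcoMod_sub_toIcoMod_lt {w : ℝ} (hw : 0 < w) (x y : ℝ) :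
    |toIcoMod hw 0 x - toIcoMod hw 0 y| < w := by
  obtain ⟨hx, hx'⟩ := toIcoMod_mem_Ico hw 0 x
  obtain ⟨hy, hy'⟩ := toIcoMod_mem_Ico hw 0 y
  rw [abs_lt]
  constructor <;> linarith

theorem coe_sub_eq_of_toIcoDiv_eq {w T : ℝ} (hw : 0 < w) {K : ℕ} (hT : K * w = T) {x y : ℝ}
    (h : (toIcoDiv hw 0 x : ZMod K) = toIcoDiv hw 0 y) :
    ((x - y : ℝ) : AddCircle T) = (toIcoMod hw 0 x - toIcoMod hw 0 y : ℝ) := by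
  obtain ⟨z, hz⟩ := (ZMod.intCast_eq_intCast_iff_dvd_sub _ _ _).1 h.symm
  have hz' : (toIcoDiv hw 0 x - toIcoDiv hw 0 y : ℝ) = K * z := by exact_mod_cast hz
  rw [← sub_eq_zero, ← AddCircle.coe_sub, AddCircle.coe_eq_zero_iff]
  refine ⟨z, ?_⟩
  rw [toIcoMod, toIcoMod, zsmul_eq_mul, zsmul_eq_mul, zsmul_eq_mul, ← hT]
  linear_combination -w * hz'

-- Pigeonhole on the multiples of `α`, in cells of width `T / N`, and of the `β k`, in cells of
-- width `T / (2 * N)`. Two multiples of `α` in one cell differ by up to twice the error allowed for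
-- the `β k`; the `β k` are therefore measured relative to the midpoint `e` of `0` and `m • α`.
theorem exists_nsmul_eq_two_mul_and_norm_nsmul_sub_le {σ : Type*} [Fintype σ] {T : ℝ} (hT : 0 < T)
    (α : AddCircle T) (β : σ → AddCircle T) {N : ℕ} (hN : 0 < N) :
    ∃ m : ℕ, 0 < m ∧ m ≤ N * (2 * N) ^ Fintype.card σ ∧ ∃ e : ℝ, |e| ≤ T / (2 * N) ∧
      m • α = ((2 * e : ℝ) : AddCircle T) ∧ ∀ k, ‖m • β k - (e : AddCircle T)‖ ≤ T / (2 * N) := by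
  classical
  have : NeZero N := ⟨hN.ne'⟩
  obtain ⟨x, rfl⟩ := QuotientAddGroup.mk_surjective α
  choose y hy using fun k => QuotientAddGroup.mk_surjective (β k)
  have hw : 0 < T / N := by positivity
  have hw' : 0 < T / (2 * N) := by positivity
  let r (s : ℕ) : ℝ := toIcoMod hw 0 (s * x)
  let cell (s : ℕ) : ZMod N × (σ → ZMod (2 * N)) :=
    (toIcoDiv hw 0 (s * x), fun k => toIcoDiv hw' 0 (s * y k - r s / 2))
  obtain ⟨a, b, hab, hb, hcell⟩ := exists_lt_le_card_map_eq cell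
  have hcoe (t : ℝ) : (b - a) • (t : AddCircle T) = ((b * t - a * t : ℝ) : AddCircle T) := by
    rw [← AddCircle.coe_nsmul, nsmul_eq_mul, Nat.cast_sub hab.le, sub_mul]
  refine ⟨b - a, Nat.sub_pos_of_lt hab, ?_, (r b - r a) / 2, ?_, ?_, fun k => ?_⟩
  · simpa [ZMod.card] using (Nat.sub_le b a).trans hb
  · rw [abs_div, abs_two, div_le_iff₀ two_pos]
    calc |r b - r a| ≤ T / N := (abs_toIcoMod_sub_toIcoMod_lt hw _ _).le
      _ = T / (2 * N) * 2 := by field_simp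
  · rw [mul_div_cancel₀ _ two_ne_zero]
    exact (hcoe x).trans
      (coe_sub_eq_of_toIcoDiv_eq hw (by field_simp) (congrArg Prod.fst hcell).symm)
  · have hk : (b - a) • β k - (((r b - r a) / 2 : ℝ) : AddCircle T) =
        ((b * y k - r b / 2 - (a * y k - r a / 2) : ℝ) : AddCircle T) := by
      rw [← hy k, hcoe, ← AddCircle.coe_sub]
      ring_nf
    rw [hk, coe_sub_eq_of_toIcoDiv_eq hw' (by push_cast; field_simp)
      (congrFun (congrArg Prod.snd hcell) k).symm]
    exact QuotientAddGroup.norm_mk_le_norm.trans (abs_toIcoMod_sub_toIcoMod_lt hw' _ _).le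

theorem exists_norm_nsmul_sub_le {κ : Type*} [Fintype κ] [Nontrivial κ] {T : ℝ} (hT : 0 < T)
    (θ : κ → AddCircle T) {N : ℕ} (hN : 0 < N) :
    ∃ m : ℕ, 0 < m ∧ m ≤ N * (2 * N) ^ (Fintype.card κ - 2) ∧
      ∃ c : AddCircle T, ∀ k, ‖m • θ k - c‖ ≤ T / (2 * N) := by
  classical
  obtain ⟨p, q, hpq⟩ := exists_pair_ne κ
  obtain ⟨m, hm, hle, e, he, hq, hne⟩ := exists_nsmul_eq_two_mul_and_norm_nsmul_sub_le hT
    (θ q - θ p) (fun k : ({p, q}ᶜ : Finset κ) => θ k - θ p) hN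
  have hcard : Fintype.card ({p, q}ᶜ : Finset κ) = Fintype.card κ - 2 := by
    rw [Fintype.card_coe, Finset.card_compl, Finset.card_pair hpq]
  have he' : ‖(e : AddCircle T)‖ ≤ T / (2 * N) := QuotientAddGroup.norm_mk_le_norm.trans he
  refine ⟨m, hm, hcard ▸ hle, m • θ p + (e : AddCircle T), fun k => ?_⟩
  rw [← sub_sub, ← nsmul_sub]
  by_cases hkp : k = p
  · rwa [hkp, sub_self, nsmul_zero, zero_sub, norm_neg]
  by_cases hkq : k = q
  · rwa [hkq, hq, two_mul, AddCircle.coe_add, add_sub_cancel_right]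
  exact hne ⟨k, by simp [hkp, hkq]⟩

end DirichletApproximation

section Angle

theorem norm_angle_eq_abs_toReal (θ : Real.Angle) : ‖θ‖ = |θ.toReal| := by
  have h : |θ.toReal| ≤ |2 * π| / 2 := by
    rw [abs_of_pos two_pi_pos, mul_div_cancel_left₀ _ two_ne_zero]
    exact θ.abs_toReal_le_pi
  conv_lhs => rw [← θ.coe_toReal]
  exact (AddCircle.norm_coe_eq_abs_iff _ two_pi_pos.ne').2 h

theorem norm_angle_coe_eq_min {x : ℝ} (hx : |x| ≤ 2 * π) :
    ‖(x : Real.Angle)‖ = min |x| (2 * π - |x|) := by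
  wlog h0 : 0 ≤ x generalizing x
  · simpa using this (x := -x) (by rwa [abs_neg]) (by linarith)
  rw [abs_of_nonneg h0] at hx ⊢
  rcases le_total x π with h | h
  · rw [norm_angle_eq_abs_toReal, Real.Angle.abs_toReal_coe_eq_self_iff.2 ⟨h0, h⟩,
      min_eq_left (by linarith)]
  · rw [← norm_neg, ← Real.Angle.coe_neg, ← zero_add ((-x : ℝ) : Real.Angle),
      ← Real.Angle.coe_two_pi, ← Real.Angle.coe_add, ← sub_eq_add_neg,
      norm_angle_eq_abs_toReal,
      Real.Angle.abs_toReal_coe_eq_self_iff.2 ⟨by linarith, by linarith⟩,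
      min_eq_right (by linarith)]

theorem cos_nsmul_eq_cos_mul_norm (n : ℕ) (θ : Real.Angle) :
    (n • θ).cos = Real.cos (n * ‖θ‖) := by
  rw [norm_angle_eq_abs_toReal, ← Nat.abs_cast n, ← abs_mul, Real.cos_abs,
    ← Real.Angle.cos_coe, Real.Angle.natCast_mul_eq_nsmul, Real.Angle.coe_toReal]

theorem norm_angle_le_pi (θ : Real.Angle) : ‖θ‖ ≤ π :=
  (norm_angle_eq_abs_toReal θ).trans_le θ.abs_toReal_le_pi

theorem one_sub_norm_sq_div_two_le_cos (θ : Real.Angle) : 1 - ‖θ‖ ^ 2 / 2 ≤ θ.cos := by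
  simpa using one_sub_sq_div_two_le_cos.trans_eq (cos_nsmul_eq_cos_mul_norm 1 θ).symm

theorem toCircle_nsmul (n : ℕ) (θ : Real.Angle) : (n • θ).toCircle = θ.toCircle ^ n := by
  induction n with
  | zero => simp
  | succ n ih => rw [succ_nsmul, Real.Angle.toCircle_add, ih, pow_succ]

theorem re_toCircle_inv_mul_toCircle (α β : Real.Angle) :
    ((α.toCircle⁻¹ * β.toCircle : Circle) : ℂ).re = (β - α).cos := by
  rw [← Real.Angle.toCircle_neg, ← Real.Angle.toCircle_add, neg_add_eq_sub,
    Real.Angle.coe_toCircle]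
  simp

theorem norm_toCircle_add_div_two_sq (α β : Real.Angle) :
    ‖((α.toCircle : ℂ) + β.toCircle) / 2‖ ^ 2 = (1 + (β - α).cos) / 2 := by
  rw [← re_toCircle_inv_mul_toCircle, Circle.coe_mul, Circle.coe_inv_eq_conj, norm_div, div_pow,
    Complex.sq_norm, Complex.normSq_add, Circle.normSq_coe, Circle.normSq_coe, Complex.norm_two,
    ← Complex.conj_re (_ * _), map_mul, Complex.conj_conj]
  ring

theorem exists_le_pi_div_norm_cos_nsmul_nonpos {θ : Real.Angle} (hθ : θ ≠ 0) :
    ∃ n : ℕ, 0 < n ∧ (n : ℝ) ≤ π / ‖θ‖ ∧ (n • θ).cos ≤ 0 := by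
  have hpos : 0 < ‖θ‖ := norm_pos_iff.2 hθ
  have hone : 1 ≤ π / ‖θ‖ := (one_le_div hpos).2 (norm_angle_le_pi θ)
  have hn : 1 ≤ ⌊π / ‖θ‖⌋₊ := Nat.one_le_floor_iff _ |>.2 hone
  have hle : (⌊π / ‖θ‖⌋₊ : ℝ) ≤ π / ‖θ‖ := Nat.floor_le (by positivity)
  refine ⟨⌊π / ‖θ‖⌋₊, hn, hle, ?_⟩
  have hupper : (⌊π / ‖θ‖⌋₊ : ℝ) * ‖θ‖ ≤ π := (le_div_iff₀ hpos).1 hle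
  have hlower : π < (⌊π / ‖θ‖⌋₊ + 1 : ℝ) * ‖θ‖ := (div_lt_iff₀ hpos).1 (Nat.lt_floor_add_one _)
  have hn' : (1 : ℝ) ≤ ⌊π / ‖θ‖⌋₊ := by exact_mod_cast hn
  rw [cos_nsmul_eq_cos_mul_norm]
  apply cos_nonpos_of_pi_div_two_le_of_le <;> nlinarith

theorem dist_angle_coe_eq_min {x y : ℝ} (hx : x ∈ Set.Ico 0 (2 * π)) (hy : y ∈ Set.Ico 0 (2 * π)) :
    dist (x : Real.Angle) y = min |x - y| (2 * π - |x - y|) := by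
  rw [dist_eq_norm, ← Real.Angle.coe_sub, norm_angle_coe_eq_min]
  exact abs_sub_le_iff.2 ⟨by linarith [hx.2, hy.1], by linarith [hx.1, hy.2]⟩

theorem angle_coe_injOn_Ico : Set.InjOn ((↑) : ℝ → Real.Angle) (Set.Ico 0 (2 * π)) :=
  fun x hx y hy h => Circle.exp_injOn_Ico (sub_zero _).le hx hy <| by
    rw [← Real.Angle.toCircle_coe, h, Real.Angle.toCircle_coe]

theorem range_exp_I_mul_eq_range_toCircle {κ : Type*} (φ : κ → ℝ) :
    (Set.range fun k => Complex.exp (Complex.I * φ k)) =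
      Set.range fun k => ((φ k : Real.Angle).toCircle : ℂ) := by
  simp only [Real.Angle.toCircle_coe, Circle.coe_exp, mul_comm Complex.I]

end Angle

section NormalMatrix

variable {ι : Type*} [Fintype ι] {A : Matrix ι ι ℂ}

open scoped ComplexOrder in
theorem conjTranspose_mulVec_eq_zero (hA : IsStarNormal A) {v : ι → ℂ} (hv : A *ᵥ v = 0) :
    Aᴴ *ᵥ v = 0 := by
  rw [← self_mul_conjTranspose_mulVec_eq_zero, ← star_eq_conjTranspose, ← hA.star_comm_self.eq,
    star_eq_conjTranspose, conjTranspose_mul_self_mulVec_eq_zero, hv]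

theorem conjTranspose_mulVec_eq_star_smul (hA : IsStarNormal A) {z : ℂ}
    {v : ι → ℂ} (hv : A *ᵥ v = z • v) : Aᴴ *ᵥ v = star z • v := by
  classical
  have hB : IsStarNormal (A - z • 1) := ⟨by
    rw [star_sub, star_smul, star_one]
    exact (hA.star_comm_self.sub_right ((Commute.one_right _).smul_right _)).sub_left
      ((Commute.one_left _).smul_left _)⟩
  have h := conjTranspose_mulVec_eq_zero hB (v := v) (by simp [sub_mulVec, hv, smul_mulVec])
  simpa [sub_mulVec, smul_mulVec, sub_eq_zero] using h

theorem star_dotProduct_eq_zero_of_mulVec_eq_smul (hA : IsStarNormal A) {z w : ℂ} (hzw : z ≠ w)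
    {v u : ι → ℂ} (hv : A *ᵥ v = z • v) (hu : A *ᵥ u = w • u) : star v ⬝ᵥ u = 0 := by
  have h : z * (star v ⬝ᵥ u) = w * (star v ⬝ᵥ u) :=
    calc z * (star v ⬝ᵥ u) = star (Aᴴ *ᵥ v) ⬝ᵥ u := by
          rw [conjTranspose_mulVec_eq_star_smul hA hv, star_smul, star_star, smul_dotProduct,
            smul_eq_mul]
      _ = star v ⬝ᵥ (A *ᵥ u) := by
          rw [star_mulVec, conjTranspose_conjTranspose, dotProduct_mulVec]
      _ = w * (star v ⬝ᵥ u) := by rw [hu, dotProduct_smul, smul_eq_mul]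
  exact (mul_eq_mul_right_iff.1 h).resolve_left hzw

theorem exists_star_dotProduct_smul_self_eq_one {v : ι → ℂ} (hv : v ≠ 0) :
    ∃ r : ℂ, star (r • v) ⬝ᵥ (r • v) = 1 := by
  have hnorm : (‖WithLp.toLp 2 v‖ : ℂ) ≠ 0 := by simpa using hv
  have hself : star v ⬝ᵥ v = (‖WithLp.toLp 2 v‖ : ℂ) ^ 2 := by
    rw [dotProduct_comm, ← EuclideanSpace.inner_toLp_toLp]
    exact inner_self_eq_norm_sq_to_K _
  refine ⟨(‖WithLp.toLp 2 v‖⁻¹ : ℝ), ?_⟩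
  rw [star_smul, smul_dotProduct, dotProduct_smul, hself, Complex.star_def, Complex.conj_ofReal,
    smul_eq_mul, smul_eq_mul, Complex.ofReal_inv]
  field_simp

variable [DecidableEq ι]

theorem exists_unit_mulVec_eq_smul {z : ℂ} (hz : z ∈ spectrum ℂ A) :
    ∃ v : ι → ℂ, star v ⬝ᵥ v = 1 ∧ A *ᵥ v = z • v := by
  rw [← spectrum_toLin', ← Module.End.hasEigenvalue_iff_mem_spectrum] at hz
  obtain ⟨v, hv⟩ := hz.exists_hasEigenvector
  obtain ⟨r, hr⟩ := exists_star_dotProduct_smul_self_eq_one hv.2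
  have hAv : A *ᵥ v = z • v := by simpa using hv.apply_eq_smul
  exact ⟨r • v, hr, by rw [mulVec_smul, hAv, smul_comm]⟩

theorem exists_unit_star_dotProduct_mulVec_eq_add_div_two (hA : IsStarNormal A) {z w : ℂ}
    (hzw : z ≠ w) (hz : z ∈ spectrum ℂ A) (hw : w ∈ spectrum ℂ A) :
    ∃ χ : ι → ℂ, star χ ⬝ᵥ χ = 1 ∧ star χ ⬝ᵥ (A *ᵥ χ) = (z + w) / 2 := by
  obtain ⟨v, hvv, hv⟩ := exists_unit_mulVec_eq_smul hz
  obtain ⟨u, huu, hu⟩ := exists_unit_mulVec_eq_smul hw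
  have hvu : star v ⬝ᵥ u = 0 := star_dotProduct_eq_zero_of_mulVec_eq_smul hA hzw hv hu
  have huv : star u ⬝ᵥ v = 0 := star_dotProduct_eq_zero_of_mulVec_eq_smul hA hzw.symm hu hv
  have hne : v + u ≠ 0 := fun h => by
    simpa [hvv, hvu] using congrArg (star v ⬝ᵥ ·) h
  obtain ⟨r, hr⟩ := exists_star_dotProduct_smul_self_eq_one hne
  have hform (x y : ℂ) :
      star (r • (v + u)) ⬝ᵥ (r • (x • v + y • u)) = star r * r * (x + y) := by
    simp only [star_smul, star_add, smul_dotProduct, dotProduct_smul, add_dotProduct,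
      dotProduct_add, hvv, huu, hvu, huv, smul_eq_mul]
    ring
  have hr' : star r * r = 1 / 2 := by
    have h := hform 1 1
    rw [one_smul, one_smul, hr] at h
    linear_combination -h / 2
  refine ⟨r • (v + u), hr, ?_⟩
  rw [mulVec_smul, mulVec_add, hv, hu, hform, hr']
  ring

open scoped ComplexOrder MatrixOrder ComplexStarModule Matrix.Norms.L2Operator in
theorem le_re_star_dotProduct_mulVec (hA : IsStarNormal A) {s : ℝ}
    (h : ∀ z ∈ spectrum ℂ A, s ≤ z.re) (ψ : ι → ℂ) :
    s * (star ψ ⬝ᵥ ψ).re ≤ (star ψ ⬝ᵥ (A *ᵥ ψ)).re := by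
  have hle : algebraMap ℝ (Matrix ι ι ℂ) s ≤ realPart A := by
    refine algebraMap_le_of_le_spectrum (ha := (realPart A).2) ?_
    rw [spectrum_realPart' A]
    rintro _ ⟨z, hz, rfl⟩
    exact h z hz
  have hstar : star ψ ⬝ᵥ (star A *ᵥ ψ) = star (star ψ ⬝ᵥ (A *ᵥ ψ)) := by
    rw [star_dotProduct, star_mulVec, ← dotProduct_mulVec, star_eq_conjTranspose]
    simp
  have hre : (star ψ ⬝ᵥ ((realPart A : Matrix ι ι ℂ) *ᵥ ψ)).re = (star ψ ⬝ᵥ (A *ᵥ ψ)).re := by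
    rw [realPart_apply_coe, smul_mulVec, add_mulVec, dotProduct_smul, dotProduct_add, hstar]
    simp only [Complex.smul_re, Complex.add_re, Complex.star_def, Complex.conj_re, smul_eq_mul]
    ring
  have hpos := (Matrix.le_iff.1 hle).re_dotProduct_nonneg ψ
  rw [sub_mulVec, dotProduct_sub, Algebra.algebraMap_eq_smul_one, smul_mulVec, one_mulVec,
    dotProduct_smul] at hpos
  simpa [hre] using hpos

open scoped Pointwise in
theorem one_sub_norm_sq_star_dotProduct_mulVec_le (hA : IsStarNormal A) {c : ℂ} (hc : ‖c‖ = 1)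
    {ε : ℝ} (h : ∀ z ∈ spectrum ℂ A, 1 - ε ^ 2 / 2 ≤ (c * z).re) {ψ : ι → ℂ}
    (hψ : star ψ ⬝ᵥ ψ = 1) : 1 - ‖star ψ ⬝ᵥ (A *ᵥ ψ)‖ ^ 2 ≤ ε ^ 2 := by
  have hc0 : c ≠ 0 := norm_ne_zero_iff.1 (by simp [hc])
  have hspec : ∀ z ∈ spectrum ℂ (c • A), 1 - ε ^ 2 / 2 ≤ z.re := by
    have hsmul : spectrum ℂ (c • A) = Units.mk0 c hc0 • spectrum ℂ A :=
      spectrum.unit_smul_eq_smul A (Units.mk0 c hc0)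
    rw [hsmul]
    rintro _ ⟨z, hz, rfl⟩
    exact h z hz
  have hle : 1 - ε ^ 2 / 2 ≤ ‖star ψ ⬝ᵥ (A *ᵥ ψ)‖ :=
    calc 1 - ε ^ 2 / 2 ≤ (star ψ ⬝ᵥ ((c • A) *ᵥ ψ)).re := by
          simpa [hψ] using le_re_star_dotProduct_mulVec (hA.smul c) hspec ψ
      _ ≤ ‖star ψ ⬝ᵥ ((c • A) *ᵥ ψ)‖ := Complex.re_le_norm _
      _ = ‖star ψ ⬝ᵥ (A *ᵥ ψ)‖ := by
          rw [smul_mulVec, dotProduct_smul, norm_smul, hc, one_mul]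
  -- `1 - w ^ 2 ≤ 2 * (1 - w)` holds for every real `w`, so the lower bound on `w` may be negative.
  nlinarith [sq_nonneg (1 - ‖star ψ ⬝ᵥ (A *ᵥ ψ)‖)]

end NormalMatrix

section Recurrence

variable {ι κ : Type*} [Fintype ι] [DecidableEq ι] {U : Matrix ι ι ℂ} {θ : κ → Real.Angle}

theorem isStarNormal_pow_of_mem_unitaryGroup (hU : U ∈ unitaryGroup ι ℂ) (n : ℕ) :
    IsStarNormal (U ^ n) :=
  have h := pow_mem hU n
  ⟨(mem_unitaryGroup_iff'.1 h).trans (mem_unitaryGroup_iff.1 h).symm⟩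

theorem one_sub_norm_sq_pow_le_of_norm_nsmul_sub_le (hU : U ∈ unitaryGroup ι ℂ)
    (hspec : spectrum ℂ U ⊆ Set.range fun k => ((θ k).toCircle : ℂ)) {n : ℕ} (hn : 0 < n)
    {c : Real.Angle} {ε : ℝ} (hc : ∀ k, ‖n • θ k - c‖ ≤ ε) {ψ : ι → ℂ} (hψ : star ψ ⬝ᵥ ψ = 1) :
    1 - ‖star ψ ⬝ᵥ ((U ^ n) *ᵥ ψ)‖ ^ 2 ≤ ε ^ 2 := by
  refine one_sub_norm_sq_star_dotProduct_mulVec_le (isStarNormal_pow_of_mem_unitaryGroup hU n)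
    (c := (c.toCircle⁻¹ : Circle)) (Circle.norm_coe _) ?_ hψ
  rw [spectrum.map_pow_of_pos U hn]
  rintro _ ⟨z, hz, rfl⟩
  obtain ⟨k, rfl⟩ := hspec hz
  calc 1 - ε ^ 2 / 2 ≤ 1 - ‖n • θ k - c‖ ^ 2 / 2 := by gcongr; exact hc k
    _ ≤ (n • θ k - c).cos := one_sub_norm_sq_div_two_le_cos _
    _ = ((c.toCircle⁻¹ : Circle) * ((θ k).toCircle : ℂ) ^ n).re := by
      rw [← re_toCircle_inv_mul_toCircle, toCircle_nsmul, Circle.coe_mul, Circle.coe_pow]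

theorem exists_one_sub_norm_sq_pow_ge_half (hU : U ∈ unitaryGroup ι ℂ) {α β : Real.Angle}
    (hα : (α.toCircle : ℂ) ∈ spectrum ℂ U) (hβ : (β.toCircle : ℂ) ∈ spectrum ℂ U) {n : ℕ}
    (hcos : (n • (β - α)).cos ≤ 0) :
    ∃ χ : ι → ℂ, star χ ⬝ᵥ χ = 1 ∧ 1 / 2 ≤ 1 - ‖star χ ⬝ᵥ ((U ^ n) *ᵥ χ)‖ ^ 2 := by
  rw [nsmul_sub] at hcos
  have hne : ((n • α).toCircle : ℂ) ≠ (n • β).toCircle := fun h => by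
    have hone := re_toCircle_inv_mul_toCircle (n • α) (n • β)
    rw [Circle.coe_injective h, inv_mul_cancel, Circle.coe_one, Complex.one_re] at hone
    linarith
  have hmem {γ : Real.Angle} (hγ : (γ.toCircle : ℂ) ∈ spectrum ℂ U) :
      ((n • γ).toCircle : ℂ) ∈ spectrum ℂ (U ^ n) := by
    rw [toCircle_nsmul, Circle.coe_pow]
    exact spectrum.pow_mem_pow U n hγ
  obtain ⟨χ, hχ, hmean⟩ := exists_unit_star_dotProduct_mulVec_eq_add_div_two
    (isStarNormal_pow_of_mem_unitaryGroup hU n) hne (hmem hα) (hmem hβ)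
  refine ⟨χ, hχ, ?_⟩
  rw [hmean, norm_toCircle_add_div_two_sq]
  linarith

theorem exists_nsmul_norm_sub_le_and_cos_nsmul_nonpos [Fintype κ] {p q : κ} (hpq : θ p ≠ θ q)
    {ε : ℝ} (hε : 0 < ε) :
    ∃ τ m : ℕ, 0 < τ ∧ 0 < m ∧ (τ • (θ p - θ q)).cos ≤ 0 ∧
      (∃ c : Real.Angle, ∀ k, ‖(τ * m) • θ k - c‖ ≤ ε) ∧
      ((τ * m : ℕ) : ℝ) ≤
        π / dist (θ p) (θ q) * ⌈π / ε⌉ * (2 * ⌈π / ε⌉) ^ (Fintype.card κ - 2) := by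
  have : Nontrivial κ := ⟨p, q, fun h => hpq (congrArg θ h)⟩
  have hN : 0 < ⌈π / ε⌉₊ := Nat.ceil_pos.2 (by positivity)
  obtain ⟨τ, hτ, hτle, hcos⟩ := exists_le_pi_div_norm_cos_nsmul_nonpos (sub_ne_zero.2 hpq)
  obtain ⟨m, hm, hmle, c, hc⟩ := exists_norm_nsmul_sub_le two_pi_pos (fun k => τ • θ k) hN
  have hwidth : 2 * π / (2 * ⌈π / ε⌉₊) ≤ ε := by
    rw [mul_div_mul_left _ _ two_ne_zero, div_le_comm₀ (by positivity) hε]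
    exact Nat.le_ceil _
  refine ⟨τ, m, hτ, hm, hcos, ⟨c, fun k => ?_⟩, ?_⟩
  · rw [mul_nsmul]
    exact (hc k).trans hwidth
  · rw [← natCast_ceil_eq_intCast_ceil (by positivity), Nat.cast_mul, mul_assoc, dist_eq_norm]
    gcongr
    exact_mod_cast hmle

theorem recurrence_time_unitary_two_cubes_general [Fintype κ] (hU : U ∈ unitaryGroup ι ℂ)
    (hθ : ∃ p q, θ p ≠ θ q) (hspec : spectrum ℂ U = Set.range fun k => ((θ k).toCircle : ℂ))
    {ε : ℝ} (hε0 : 0 < ε) (hε : ε ^ 2 < 1 / 2) :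
    ∃ mr : ℕ, 0 < mr ∧
      (mr : ℝ) ≤ π / (⨆ p : κ × κ, dist (θ p.1) (θ p.2)) * ⌈π / ε⌉ *
        (2 * ⌈π / ε⌉) ^ (Fintype.card κ - 2) ∧
      (∀ ψ : ι → ℂ, star ψ ⬝ᵥ ψ = 1 → 1 - ‖star ψ ⬝ᵥ ((U ^ mr) *ᵥ ψ)‖ ^ 2 ≤ ε ^ 2) ∧
      (∃ χ : ι → ℂ, star χ ⬝ᵥ χ = 1 ∧ ∃ m' : ℕ, 0 < m' ∧ m' ≤ mr ∧
        1 - ‖star χ ⬝ᵥ ((U ^ m') *ᵥ χ)‖ ^ 2 > ε ^ 2) := by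
  obtain ⟨p₀, q₀, hne₀⟩ := hθ
  have : Nonempty (κ × κ) := ⟨p₀, q₀⟩
  obtain ⟨⟨p, q⟩, hsup⟩ := exists_eq_ciSup_of_finite (f := fun p : κ × κ => dist (θ p.1) (θ p.2))
  have hne : θ p ≠ θ q := dist_pos.1 <| (dist_pos.2 hne₀).trans_le <|
    (le_ciSup (Finite.bddAbove_range _) (p₀, q₀)).trans_eq hsup.symm
  obtain ⟨τ, m, hτ, hm, hcos, ⟨c, hc⟩, hle⟩ := exists_nsmul_norm_sub_le_and_cos_nsmul_nonpos hne hε0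
  obtain ⟨χ, hχ, hhalf⟩ := exists_one_sub_norm_sq_pow_ge_half hU (hspec ▸ Set.mem_range_self q)
    (hspec ▸ Set.mem_range_self p) hcos
  exact ⟨τ * m, by positivity, hsup ▸ hle,
    fun ψ hψ => one_sub_norm_sq_pow_le_of_norm_nsmul_sub_le hU hspec.subset (by positivity) hc hψ,
    χ, hχ, τ, hτ, Nat.le_mul_of_pos_right τ hm, hε.trans_le hhalf⟩

end Recurrence

theorem recurrence_time_unitary_two_cubes
    (D d : ℕ) (hd : 2 ≤ d) (U : Matrix (Fin D) (Fin D) ℂ)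
    (hU : U ∈ Matrix.unitaryGroup (Fin D) ℂ)
    (φ : Fin d → ℝ) (hφ : ∀ k, 0 ≤ φ k ∧ φ k < 2 * π)
    (hφinj : Function.Injective φ)
    (hspec : spectrum ℂ U = Set.range (fun k => Complex.exp (Complex.I * φ k)))
    (ε : ℝ) (hε0 : 0 < ε) (hε1 : ε ≤ 1 / 2) :
    ∃ mr : ℕ, 0 < mr ∧
      (mr : ℝ) ≤ (π / ⨆ p : Fin d × Fin d, min |φ p.1 - φ p.2| (2 * π - |φ p.1 - φ p.2|)) *
        (⌈π / ε⌉ : ℝ) * (2 * ⌈π / ε⌉ + 1 : ℝ) ^ (d - 2) ∧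
      (∀ ψ : Fin D → ℂ, star ψ ⬝ᵥ ψ = 1 →
        1 - ‖star ψ ⬝ᵥ ((U ^ mr) *ᵥ ψ)‖ ^ 2 ≤ ε ^ 2) ∧
      (∃ χ : Fin D → ℂ, star χ ⬝ᵥ χ = 1 ∧ ∃ m' : ℕ, 0 < m' ∧ m' ≤ mr ∧
        1 - ‖star χ ⬝ᵥ ((U ^ m') *ᵥ χ)‖ ^ 2 > ε ^ 2) := by
  have hne : (φ ⟨0, by lia⟩ : Real.Angle) ≠ φ ⟨1, by lia⟩ := fun h => by
    simpa using hφinj (angle_coe_injOn_Ico (hφ _) (hφ _) h)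
  obtain ⟨mr, hmr, hle, hrec, hescape⟩ := recurrence_time_unitary_two_cubes_general hU
    (θ := fun k => φ k) ⟨_, _, hne⟩ (hspec.trans (range_exp_I_mul_eq_range_toCircle φ))
    hε0 (by nlinarith)
  simp only [dist_angle_coe_eq_min (hφ _) (hφ _), Fintype.card_fin] at hle
  refine ⟨mr, hmr, hle.trans ?_, hrec, hescape⟩
  have hsup : 0 ≤ ⨆ p : Fin d × Fin d, min |φ p.1 - φ p.2| (2 * π - |φ p.1 - φ p.2|) :=
    Real.iSup_nonneg fun p => dist_angle_coe_eq_min (hφ p.1) (hφ p.2) ▸ dist_nonneg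
  gcongr
  linarith
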